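/- Let σ² > 0 and Py ≥ σ² be real numbers, and set P₀ := gaussianReal 0 σ² and P₁ := gaussianReal 0 Py. Then for every measurable set A ⊆ ℝ, the sum of the false-positive and miss-detection probabilities satisfies (P₀ A).toReal + (P₁ Aᶜ).toReal ≥ 1 - Real.sqrt ((klDiv P₀ P₁).toReal / 2) ≥ 1 - Real.sqrt ((klDiv P₁ P₀).toReal / 2). -/

import Mathlib

open MeasureTheory ProbabilityTheory
open scoped ENNReal NNReal Classical

/-- Kullback–Leibler divergence of `μ` from `ν`: `∫ log (dμ/dν) dμ` when `μ ≪ ν` and the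
log-likelihood ratio is `μ`-integrable, and `∞` otherwise. -/
noncomputable def klDiv {α : Type*} [MeasurableSpace α] (μ ν : Measure α) : ℝ≥0∞ :=
  if μ ≪ ν ∧ Integrable (llr μ ν) μ then ENNReal.ofReal (∫ x, llr μ ν x ∂μ) else ⊤

/-! Tilting `ν` by `f` and applying Gibbs' inequality to `μ` and the tilted measure gives the
Donsker–Varadhan inequality `∫ f ∂μ - log ∫ exp f ∂ν ≤ D(μ‖ν)`. When `X` is sub-Gaussian under `ν`,
the choice `f = t X` bounds a quadratic in `t` from below for every `t`, so its discriminant is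
nonpositive: `(∫ X ∂μ)² ≤ 2 c D(μ‖ν)`. By Hoeffding's lemma a centred indicator is sub-Gaussian with
`c = 1/4`, which is Pinsker's inequality.

For Gaussians with means `m`, `m'` and variances `v`, `w`, twice the divergence is
`log (w / v) + (v + (m - m')²) / w - 1`, and the two orders are compared through
`2 log r ≤ r - 1 / r` at `r = w / v ≥ 1`. -/

section Divergence

variable {α : Type*} [MeasurableSpace α] {μ ν ξ : Measure α}

lemma klDiv_eq_informationTheory_klDiv (h : μ Set.univ = ν Set.univ) :
    klDiv μ ν = InformationTheory.klDiv μ ν := by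
  simp [klDiv, InformationTheory.klDiv_def, measureReal_def, h]

lemma toReal_klDiv_eq_integral_llr [IsProbabilityMeasure μ] [IsProbabilityMeasure ν]
    (hμν : μ ≪ ν) : (klDiv μ ν).toReal = ∫ x, llr μ ν x ∂μ := by
  have h_univ : μ Set.univ = ν Set.univ := by simp
  rw [klDiv_eq_informationTheory_klDiv h_univ,
    InformationTheory.toReal_klDiv_of_measure_eq hμν h_univ]

lemma llr_ae_eq_llr_sub_llr [SigmaFinite μ] [SigmaFinite ν] [SigmaFinite ξ]
    (hμν : μ ≪ ν) (hνξ : ν ≪ ξ) :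
    llr μ ν =ᵐ[μ] fun x ↦ llr μ ξ x - llr ν ξ x := by
  have hμξ := hμν.trans hνξ
  filter_upwards [hμν.ae_le (Measure.rnDeriv_eq_div hμξ hνξ),
    Measure.rnDeriv_pos hμξ, hμξ.ae_le (Measure.rnDeriv_lt_top μ ξ),
    hμν.ae_le (Measure.rnDeriv_pos hνξ), hμξ.ae_le (Measure.rnDeriv_lt_top ν ξ)]
    with x h_div hμ_pos hμ_top hν_pos hν_top
  rw [llr, llr, llr, h_div, ENNReal.toReal_div,
    Real.log_div (ENNReal.toReal_pos hμ_pos.ne' hμ_top.ne).ne'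
      (ENNReal.toReal_pos hν_pos.ne' hν_top.ne).ne']

lemma integral_sub_log_integral_exp_le_integral_llr [IsProbabilityMeasure μ] [SigmaFinite ν]
    {f : α → ℝ} (hμν : μ ≪ ν) (h_int : Integrable (llr μ ν) μ) (hfμ : Integrable f μ)
    (hfν : Integrable (fun x ↦ Real.exp (f x)) ν) :
    ∫ x, f x ∂μ - Real.log (∫ x, Real.exp (f x) ∂ν) ≤ ∫ x, llr μ ν x ∂μ := by
  have : NeZero ν :=
    ⟨by rintro rfl; exact NeZero.ne μ (Measure.absolutelyContinuous_zero_iff.1 hμν)⟩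
  have := isProbabilityMeasure_tilted hfν
  have h_gibbs := InformationTheory.integral_llr_add_sub_measure_univ_nonneg
    (hμν.trans (absolutelyContinuous_tilted hfν)) (integrable_llr_tilted_right hμν hfμ h_int hfν)
  rw [integral_llr_tilted_right hμν hfμ hfν h_int, probReal_univ, probReal_univ] at h_gibbs
  linarith

lemma sq_integral_le_mul_integral_llr_of_hasSubgaussianMGF [IsProbabilityMeasure μ] [SigmaFinite ν]
    {X : α → ℝ} {c : ℝ≥0} (hX : HasSubgaussianMGF X c ν) (hXμ : Integrable X μ)
    (hμν : μ ≪ ν) (h_int : Integrable (llr μ ν) μ) :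
    (∫ x, X x ∂μ) ^ 2 ≤ 2 * c * ∫ x, llr μ ν x ∂μ := by
  have h_quadratic (t : ℝ) :
      0 ≤ c / 2 * (t * t) + -(∫ x, X x ∂μ) * t + ∫ x, llr μ ν x ∂μ := by
    have h_dv := integral_sub_log_integral_exp_le_integral_llr hμν h_int (hXμ.const_mul t)
      (hX.integrable_exp_mul t)
    have h_cgf : Real.log (∫ x, Real.exp (t * X x) ∂ν) ≤ c * t ^ 2 / 2 := hX.cgf_le t
    rw [integral_const_mul] at h_dv
    linarith
  have h_discrim := discrim_le_zero h_quadratic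
  rw [discrim] at h_discrim
  linarith

lemma abs_measureReal_sub_le_sqrt_klDiv [IsProbabilityMeasure μ] [IsProbabilityMeasure ν]
    (h : klDiv μ ν ≠ ∞) {A : Set α} (hA : MeasurableSet A) :
    |μ.real A - ν.real A| ≤ √((klDiv μ ν).toReal / 2) := by
  have h_univ : μ Set.univ = ν Set.univ := by simp
  obtain ⟨hμν, h_int⟩ := InformationTheory.klDiv_ne_top_iff.1
    (klDiv_eq_informationTheory_klDiv h_univ ▸ h)
  have h_mem (x : α) : A.indicator (1 : α → ℝ) x ∈ Set.Icc 0 1 :=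
    ⟨Set.indicator_nonneg (fun _ _ ↦ zero_le_one) x,
      Set.indicator_le_self' (fun _ _ ↦ zero_le_one) x⟩
  have h_subG : HasSubgaussianMGF (fun x ↦ A.indicator 1 x - ν.real A) ((1 / 2) ^ 2) ν := by
    simpa only [integral_indicator_one hA, sub_zero, nnnorm_one] using
      hasSubgaussianMGF_of_mem_Icc (measurable_one.indicator hA).aemeasurable (ae_of_all ν h_mem)
  have h_ind : Integrable (A.indicator (1 : α → ℝ)) μ := (integrable_const 1).indicator hA
  have h_mean : ∫ x, (A.indicator 1 x - ν.real A) ∂μ = μ.real A - ν.real A := by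
    rw [integral_sub h_ind (integrable_const _), integral_indicator_one hA, integral_const,
      probReal_univ, one_smul]
  have h_sq := sq_integral_le_mul_integral_llr_of_hasSubgaussianMGF h_subG
    (h_ind.sub (integrable_const _)) hμν h_int
  rw [h_mean, ← toReal_klDiv_eq_integral_llr hμν] at h_sq
  refine Real.abs_le_sqrt (h_sq.trans_eq ?_)
  push_cast
  ring

lemma one_sub_sqrt_klDiv_le_measureReal_add_measureReal_compl [IsProbabilityMeasure μ]
    [IsProbabilityMeasure ν] (h : klDiv μ ν ≠ ∞) {A : Set α} (hA : MeasurableSet A) :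
    1 - √((klDiv μ ν).toReal / 2) ≤ μ.real A + ν.real Aᶜ := by
  have h_pinsker := abs_measureReal_sub_le_sqrt_klDiv h hA
  rw [probReal_compl_eq_one_sub hA]
  linarith [neg_abs_le (μ.real A - ν.real A)]

end Divergence

lemma two_mul_log_le_sub_inv {r : ℝ} (hr : 1 ≤ r) : 2 * Real.log r ≤ r - r⁻¹ := by
  have h_sinh := Real.self_le_sinh_iff.2 (Real.log_nonneg hr)
  rw [Real.sinh_log (by positivity)] at h_sinh
  linarith

section Gaussian

variable (m m' : ℝ) {v w : ℝ≥0}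

lemma log_gaussianPDFReal (hv : v ≠ 0) (x : ℝ) :
    Real.log (gaussianPDFReal m v x) = -(Real.log (2 * Real.pi * v) + (x - m) ^ 2 / v) / 2 := by
  rw [gaussianPDFReal, Real.log_mul (by positivity) (by positivity), Real.log_exp, Real.log_inv,
    Real.log_sqrt (by positivity)]
  field

lemma llr_gaussianReal_volume (hv : v ≠ 0) :
    llr (gaussianReal m v) volume =ᵐ[volume]
      fun x ↦ -(Real.log (2 * Real.pi * v) + (x - m) ^ 2 / v) / 2 := by
  filter_upwards [rnDeriv_gaussianReal m v] with x hx
  rw [llr, hx, toReal_gaussianPDF, log_gaussianPDFReal m hv]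

lemma gaussianReal_absolutelyContinuous_gaussianReal (hv : v ≠ 0) (hw : w ≠ 0) :
    gaussianReal m v ≪ gaussianReal m' w :=
  (gaussianReal_absolutelyContinuous m hv).trans (gaussianReal_absolutelyContinuous' m' hw)

lemma llr_gaussianReal_gaussianReal (hv : v ≠ 0) (hw : w ≠ 0) :
    llr (gaussianReal m v) (gaussianReal m' w) =ᵐ[gaussianReal m v]
      fun x ↦ (Real.log (w / v) + ((x - m') ^ 2 / w - (x - m) ^ 2 / v)) / 2 := by
  have h_vol := gaussianReal_absolutelyContinuous m hv
  filter_upwards [llr_ae_eq_llr_sub_llr (gaussianReal_absolutelyContinuous_gaussianReal m m' hv hw)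
      (gaussianReal_absolutelyContinuous m' hw),
    h_vol.ae_le (llr_gaussianReal_volume m hv), h_vol.ae_le (llr_gaussianReal_volume m' hw)]
    with x hx hxv hxw
  have hv' : (v : ℝ) ≠ 0 := by positivity
  have hw' : (w : ℝ) ≠ 0 := by positivity
  rw [hx, hxv, hxw, Real.log_mul (by positivity) hv', Real.log_mul (by positivity) hw',
    Real.log_div hw' hv']
  ring

lemma integrable_sub_const_sq_gaussianReal (v : ℝ≥0) (a : ℝ) :
    Integrable (fun x ↦ (x - a) ^ 2) (gaussianReal m v) :=
  ((memLp_id_gaussianReal 2).sub (memLp_const a)).integrable_sq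

lemma integral_sub_const_sq_gaussianReal (v : ℝ≥0) (a : ℝ) :
    ∫ x, (x - a) ^ 2 ∂(gaussianReal m v) = v + (m - a) ^ 2 := by
  have h_memLp : MemLp (fun x ↦ x - a) 2 (gaussianReal m v) :=
    (memLp_id_gaussianReal 2).sub (memLp_const a)
  have h_mean : ∫ x, (x - a) ∂(gaussianReal m v) = m - a := by
    rw [integral_sub (f := fun x ↦ x) ((memLp_id_gaussianReal 1).integrable le_rfl)
      (integrable_const a), integral_id_gaussianReal, integral_const, probReal_univ, one_smul]
  have h_var := variance_eq_sub h_memLp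
  rw [variance_sub_const (by fun_prop), variance_fun_id_gaussianReal, h_mean] at h_var
  simp only [Pi.pow_apply] at h_var
  linarith

lemma integrable_llr_gaussianReal (hv : v ≠ 0) (hw : w ≠ 0) :
    Integrable (llr (gaussianReal m v) (gaussianReal m' w)) (gaussianReal m v) :=
  (integrable_congr (llr_gaussianReal_gaussianReal m m' hv hw)).2 <|
    ((integrable_const _).add (((integrable_sub_const_sq_gaussianReal m v m').div_const _).sub
      ((integrable_sub_const_sq_gaussianReal m v m).div_const _))).div_const _

lemma klDiv_gaussianReal_ne_top (hv : v ≠ 0) (hw : w ≠ 0) :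
    klDiv (gaussianReal m v) (gaussianReal m' w) ≠ ∞ := by
  rw [klDiv_eq_informationTheory_klDiv (by simp)]
  exact InformationTheory.klDiv_ne_top (gaussianReal_absolutelyContinuous_gaussianReal m m' hv hw)
    (integrable_llr_gaussianReal m m' hv hw)

lemma toReal_klDiv_gaussianReal (hv : v ≠ 0) (hw : w ≠ 0) :
    (klDiv (gaussianReal m v) (gaussianReal m' w)).toReal =
      (Real.log (w / v) + (v + (m - m') ^ 2) / w - 1) / 2 := by
  have hv' : (v : ℝ) ≠ 0 := by positivity
  have h_int (u : ℝ≥0) (a : ℝ) : Integrable (fun x ↦ (x - a) ^ 2 / (u : ℝ)) (gaussianReal m v) :=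
    (integrable_sub_const_sq_gaussianReal m v a).div_const _
  calc (klDiv (gaussianReal m v) (gaussianReal m' w)).toReal
    _ = (∫ x, (Real.log (w / v) + ((x - m') ^ 2 / w - (x - m) ^ 2 / v))
          ∂(gaussianReal m v)) / 2 := by
      rw [toReal_klDiv_eq_integral_llr
        (gaussianReal_absolutelyContinuous_gaussianReal m m' hv hw),
        integral_congr_ae (llr_gaussianReal_gaussianReal m m' hv hw), integral_div]
    _ = (Real.log (w / v) + ((v + (m - m') ^ 2) / w - (v + (m - m) ^ 2) / v)) / 2 := by
      rw [integral_add (integrable_const _) ((h_int w m').sub' (h_int v m)),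
        integral_sub (h_int w m') (h_int v m), integral_div, integral_div,
        integral_sub_const_sq_gaussianReal, integral_sub_const_sq_gaussianReal, integral_const,
        probReal_univ, one_smul]
    _ = (Real.log (w / v) + (v + (m - m') ^ 2) / w - 1) / 2 := by
      rw [sub_self, zero_pow two_ne_zero, add_zero, div_self hv', add_sub_assoc]

lemma toReal_klDiv_gaussianReal_le_swap (hv : 0 < v) (hvw : v ≤ w) :
    (klDiv (gaussianReal m v) (gaussianReal m' w)).toReal ≤
      (klDiv (gaussianReal m' w) (gaussianReal m v)).toReal := by
  have hw := hv.trans_le hvw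
  have h_ratio : (1 : ℝ) ≤ w / v := (one_le_div (NNReal.coe_pos.2 hv)).2 (NNReal.coe_le_coe.2 hvw)
  have h_mean : (m - m') ^ 2 / (w : ℝ) ≤ (m - m') ^ 2 / v := by gcongr
  have h_log := two_mul_log_le_sub_inv h_ratio
  have h_log_swap : Real.log ((v : ℝ) / w) = -Real.log (w / v) := by rw [← Real.log_inv, inv_div]
  rw [inv_div] at h_log
  rw [toReal_klDiv_gaussianReal m m' hv.ne' hw.ne', toReal_klDiv_gaussianReal m' m hw.ne' hv.ne',
    h_log_swap, sub_sq_comm m' m, add_div, add_div]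
  linarith

end Gaussian

theorem stmt_11_general (m₀ m₁ : ℝ) {v w : ℝ≥0} (hv : 0 < v) (hvw : v ≤ w) {A : Set ℝ}
    (hA : MeasurableSet A) :
    1 - √((klDiv (gaussianReal m₀ v) (gaussianReal m₁ w)).toReal / 2) ≤
        (gaussianReal m₀ v).real A + (gaussianReal m₁ w).real Aᶜ ∧
      1 - √((klDiv (gaussianReal m₁ w) (gaussianReal m₀ v)).toReal / 2) ≤
        1 - √((klDiv (gaussianReal m₀ v) (gaussianReal m₁ w)).toReal / 2) := by
  refine ⟨one_sub_sqrt_klDiv_le_measureReal_add_measureReal_compl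
    (klDiv_gaussianReal_ne_top m₀ m₁ hv.ne' (hv.trans_le hvw).ne') hA, ?_⟩
  gcongr 1 - √(?_ / 2)
  exact toReal_klDiv_gaussianReal_le_swap m₀ m₁ hv hvw

/-- Corollary 2: for any detector (decision region `A`), the detection error probability is
bounded below by `1 - √(D(p₀‖p₁)/2) ≥ 1 - √(D(p₁‖p₀)/2)`. -/
theorem stmt_11 (σ2 Py : ℝ≥0) (hσ : 0 < σ2) (hle : σ2 ≤ Py)
    (P₀ : Measure ℝ) (P₁ : Measure ℝ)
    (hP₀ : P₀ = gaussianReal 0 σ2) (hP₁ : P₁ = gaussianReal 0 Py) :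
    ∀ A : Set ℝ, MeasurableSet A →
      1 - Real.sqrt ((klDiv P₀ P₁).toReal / 2) ≤ (P₀ A).toReal + (P₁ Aᶜ).toReal ∧
      1 - Real.sqrt ((klDiv P₁ P₀).toReal / 2) ≤ 1 - Real.sqrt ((klDiv P₀ P₁).toReal / 2) := by
  subst hP₀ hP₁
  exact fun _ hA ↦ stmt_11_general 0 0 hσ hle hA
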